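/- Two braid words are strongly equivalent (equivalent via all relations of F_n except the classical second Reidemeister move ζ_i² = 1) if and only if their associated decorated graphs Γ(b), Γ(b') are isomorphic preserving all structure: the ordering of the n upper and n lower endpoint vertices, the downward orientation of edges, and, at each 4-valent vertex, the pairing of each incoming edge with its opposite outgoing edge. -/

import Mathlib

set_option maxHeartbeats 1000000

namespace OneTermBracket

/-- Letters (generators) of free braid words on `n` strands:
`zeta i` is a classical crossing, `tau i` a virtual crossing, `1 ≤ i+1 ≤ n-1`. -/
inductive Letter (n : ℕ) where
  | zeta (i : Fin (n-1))
  | tau  (i : Fin (n-1))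
deriving DecidableEq

namespace Letter

def idx {n : ℕ} : Letter n → Fin (n-1)
  | zeta i => i
  | tau i => i

def isZeta {n : ℕ} : Letter n → Bool
  | zeta _ => true
  | tau _ => false

end Letter

def lo {n : ℕ} (i : Fin (n-1)) : Fin n := ⟨i.1, by have := i.2; omega⟩
def hi {n : ℕ} (i : Fin (n-1)) : Fin n := ⟨i.1 + 1, by have := i.2; omega⟩

/-- The transposition `(i, i+1)` of `{1, …, n}`. -/
def sPerm {n : ℕ} (i : Fin (n-1)) : Equiv.Perm (Fin n) := Equiv.swap (lo i) (hi i)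

/-- Each letter acts on positions as the transposition `(i, i+1)`. -/
def transOf {n : ℕ} (g : Letter n) : Equiv.Perm (Fin n) := sPerm g.idx

/-- The permutation realized by the prefix of length `j` of a braid word,
mapping the top label of a strand to its position at level `j`. -/
def prefPerm {n : ℕ} (w : List (Letter n)) (j : ℕ) : Equiv.Perm (Fin n) :=
  (((w.take j).map transOf).reverse).prod

/-- The permutation `P(β)` of a braid word (top endpoint `k` goes to bottom endpoint `P k`). -/
def permOf {n : ℕ} (w : List (Letter n)) : Equiv.Perm (Fin n) :=
  ((w.map transOf).reverse).prod

/-- The unordered pair of (top labels of the) strands crossing at position `j` of `w`. -/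
def strandsAt {n : ℕ} (w : List (Letter n)) (j : ℕ) : Option (Sym2 (Fin n)) :=
  (w[j]?).map fun g => s((prefPerm w j)⁻¹ (lo g.idx), (prefPerm w j)⁻¹ (hi g.idx))

/-- Component-wise parity determined by a partition `{1,…,n} = N₁ ⊔ N₂` (encoded by
`c : Fin n → Bool`): a classical crossing is odd (`1`) iff its two strands lie in
different parts. Non-classical positions get `0`. -/
def cwParity {n : ℕ} (c : Fin n → Bool) (w : List (Letter n)) (j : ℕ) : ZMod 2 :=
  match w[j]? with
  | some (.zeta i) =>
      if c ((prefPerm w j)⁻¹ (lo i)) = c ((prefPerm w j)⁻¹ (hi i)) then 0 else 1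
  | _ => 0

/-- The defining relations of `F_n` and `FB_n` which do not involve
`ζ_i² = 1` or the classical third Reidemeister move ("strong" moves). -/
inductive RelStrong (n : ℕ) : List (Letter n) → List (Letter n) → Prop
  | tt (i : Fin (n-1)) : RelStrong n [.tau i, .tau i] []
  | virt (i : Fin (n-1)) : RelStrong n [.zeta i, .tau i] [.tau i, .zeta i]
  | far_zz (i j : Fin (n-1)) (h : 2 ≤ Nat.dist i j) :
      RelStrong n [.zeta i, .zeta j] [.zeta j, .zeta i]
  | far_zt (i j : Fin (n-1)) (h : 2 ≤ Nat.dist i j) :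
      RelStrong n [.zeta i, .tau j] [.tau j, .zeta i]
  | far_tt (i j : Fin (n-1)) (h : 2 ≤ Nat.dist i j) :
      RelStrong n [.tau i, .tau j] [.tau j, .tau i]
  | r3v (i j : Fin (n-1)) (h : (j:ℕ) = (i:ℕ) + 1) :
      RelStrong n [.tau i, .tau j, .tau i] [.tau j, .tau i, .tau j]
  | semi (i j : Fin (n-1)) (h : (j:ℕ) = (i:ℕ) + 1) :
      RelStrong n [.tau i, .tau j, .zeta i] [.zeta j, .tau i, .tau j]

/-- The defining relations of `F_n`. -/
inductive RelF (n : ℕ) : List (Letter n) → List (Letter n) → Prop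
  | strong {r1 r2} : RelStrong n r1 r2 → RelF n r1 r2
  | zz (i : Fin (n-1)) : RelF n [.zeta i, .zeta i] []

/-- The defining relations of the free braid group `FB_n`. -/
inductive RelFB (n : ℕ) : List (Letter n) → List (Letter n) → Prop
  | ofF {r1 r2} : RelF n r1 r2 → RelFB n r1 r2
  | r3c (i j : Fin (n-1)) (h : (j:ℕ) = (i:ℕ) + 1) :
      RelFB n [.zeta i, .zeta j, .zeta i] [.zeta j, .zeta i, .zeta j]

/-- One application of a relation from `R` inside a word. -/
def StepOf {n : ℕ} (R : List (Letter n) → List (Letter n) → Prop)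
    (w1 w2 : List (Letter n)) : Prop :=
  ∃ A B r1 r2, R r1 r2 ∧ w1 = A ++ r1 ++ B ∧ w2 = A ++ r2 ++ B

/-- Strong equivalence: all moves of `F_n` except `ζ_i² = 1`. -/
def StrongEq {n : ℕ} (w1 w2 : List (Letter n)) : Prop :=
  Relation.EqvGen (StepOf (RelStrong n)) w1 w2

/-- Equivalence of braid words as elements of `F_n`. -/
def EqF {n : ℕ} (w1 w2 : List (Letter n)) : Prop :=
  Relation.EqvGen (StepOf (RelF n)) w1 w2

/-- Equivalence of braid words as elements of the free braid group `FB_n`. -/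
def EqFB {n : ℕ} (w1 w2 : List (Letter n)) : Prop :=
  Relation.EqvGen (StepOf (RelFB n)) w1 w2

/-- The parity axioms, for a parity `P` defined on the class `C` of braid words.
`P w j` is the parity of the crossing at position `j` of `w` (only classical
positions matter). -/
structure IsParity {n : ℕ} (C : List (Letter n) → Prop)
    (P : List (Letter n) → ℕ → ZMod 2) : Prop where
  /-- Crossings not taking part in a relation keep their parity (part before). -/
  untouched_left : ∀ A B r1 r2, RelFB n r1 r2 →
    C (A ++ r1 ++ B) → C (A ++ r2 ++ B) → ∀ j < A.length,
    P (A ++ r1 ++ B) j = P (A ++ r2 ++ B) j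
  /-- Crossings not taking part in a relation keep their parity (part after). -/
  untouched_right : ∀ A B r1 r2, RelFB n r1 r2 →
    C (A ++ r1 ++ B) → C (A ++ r2 ++ B) → ∀ j < B.length,
    P (A ++ r1 ++ B) (A.length + r1.length + j) = P (A ++ r2 ++ B) (A.length + r2.length + j)
  /-- In commutation-type relations (far commutativity, virtualization), the two
  letters keep their parities. -/
  comm : ∀ A B x y, RelFB n [x, y] [y, x] →
    C (A ++ [x, y] ++ B) → C (A ++ [y, x] ++ B) →
    P (A ++ [x, y] ++ B) A.length = P (A ++ [y, x] ++ B) (A.length + 1) ∧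
    P (A ++ [x, y] ++ B) (A.length + 1) = P (A ++ [y, x] ++ B) A.length
  /-- In a classical second Reidemeister move both crossings have the same parity. -/
  r2c : ∀ A B (i : Fin (n-1)),
    C (A ++ [.zeta i, .zeta i] ++ B) → C (A ++ B) →
    P (A ++ [.zeta i, .zeta i] ++ B) A.length
      = P (A ++ [.zeta i, .zeta i] ++ B) (A.length + 1)
  /-- In a semivirtual move, the classical crossing keeps its parity. -/
  semiv : ∀ A B (i j : Fin (n-1)), (j:ℕ) = (i:ℕ) + 1 →
    C (A ++ [.tau i, .tau j, .zeta i] ++ B) →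
    C (A ++ [.zeta j, .tau i, .tau j] ++ B) →
    P (A ++ [.tau i, .tau j, .zeta i] ++ B) (A.length + 2)
      = P (A ++ [.zeta j, .tau i, .tau j] ++ B) A.length
  /-- In a classical third Reidemeister move the number of odd crossings is even. -/
  r3_even : ∀ A B (i j : Fin (n-1)), (j:ℕ) = (i:ℕ) + 1 →
    C (A ++ [.zeta i, .zeta j, .zeta i] ++ B) →
    C (A ++ [.zeta j, .zeta i, .zeta j] ++ B) →
    P (A ++ [.zeta i, .zeta j, .zeta i] ++ B) A.length
      + P (A ++ [.zeta i, .zeta j, .zeta i] ++ B) (A.length + 1)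
      + P (A ++ [.zeta i, .zeta j, .zeta i] ++ B) (A.length + 2) = 0
  /-- In a classical third Reidemeister move, upper/middle/lower crossings on the
  left correspond to lower/middle/upper crossings on the right with equal parities. -/
  r3_corr : ∀ A B (i j : Fin (n-1)), (j:ℕ) = (i:ℕ) + 1 →
    C (A ++ [.zeta i, .zeta j, .zeta i] ++ B) →
    C (A ++ [.zeta j, .zeta i, .zeta j] ++ B) →
    P (A ++ [.zeta i, .zeta j, .zeta i] ++ B) A.length
      = P (A ++ [.zeta j, .zeta i, .zeta j] ++ B) (A.length + 2) ∧
    P (A ++ [.zeta i, .zeta j, .zeta i] ++ B) (A.length + 1)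
      = P (A ++ [.zeta j, .zeta i, .zeta j] ++ B) (A.length + 1) ∧
    P (A ++ [.zeta i, .zeta j, .zeta i] ++ B) (A.length + 2)
      = P (A ++ [.zeta j, .zeta i, .zeta j] ++ B) A.length

/-- Delete from `w` all classical letters whose parity (given by `par`) is even. -/
def deleteEven {n : ℕ} (w : List (Letter n)) (par : ℕ → ZMod 2) : List (Letter n) :=
  (List.range w.length).filterMap fun j =>
    (w[j]?).bind fun g =>
      match g with
      | .zeta i => if par j = 0 then none else some (.zeta i)
      | .tau i => some (.tau i)

/-- The one-term parity bracket: delete all even classical crossings. -/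
def bracket {n : ℕ} (P : List (Letter n) → ℕ → ZMod 2) (w : List (Letter n)) :
    List (Letter n) :=
  deleteEven w (P w)

/-- Positions of classical crossings of a word. -/
def ZetaPos {n : ℕ} (w : List (Letter n)) : Set ℕ :=
  {j | ∃ i, w[j]? = some (Letter.zeta i)}

/-- The classical crossings at positions `j1 < j2` form a bigon: they lie on the same
pair of strands, and no classical crossing between them lies on either of those strands. -/
def IsBigon {n : ℕ} (w : List (Letter n)) (j1 j2 : ℕ) : Prop :=
  j1 < j2 ∧ j1 ∈ ZetaPos w ∧ j2 ∈ ZetaPos w ∧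
  strandsAt w j1 = strandsAt w j2 ∧
  ∀ k, j1 < k → k < j2 → k ∈ ZetaPos w →
    ∀ e e', strandsAt w j1 = some e → strandsAt w k = some e' → ∀ a ∈ e, a ∉ e'

/-- Delete the letters at two given positions. -/
def delete2 {n : ℕ} (w : List (Letter n)) (j1 j2 : ℕ) : List (Letter n) :=
  (w.eraseIdx (max j1 j2)).eraseIdx (min j1 j2)

/-- One bigon reduction. -/
def BigonStep {n : ℕ} (w w' : List (Letter n)) : Prop :=
  ∃ j1 j2, IsBigon w j1 j2 ∧ w' = delete2 w j1 j2

/-- A word is irreducible if it admits no bigon reduction. -/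
def Irreducible {n : ℕ} (w : List (Letter n)) : Prop := ¬ ∃ j1 j2, IsBigon w j1 j2

/-- Number of classical letters of a word. -/
def countZeta {n : ℕ} (w : List (Letter n)) : ℕ := (w.filter Letter.isZeta).length

/-- `φ` is an isomorphism of the decorated graphs `Γ(w1) ≅ Γ(w2)`, encoded
combinatorially: a bijection of classical crossings preserving the pair of strands
through each crossing, the order of crossings along each strand, and the endpoint
structure (the permutation). -/
structure IsGammaIso {n : ℕ} (w1 w2 : List (Letter n)) (φ : ℕ → ℕ) : Prop where
  maps : ∀ j ∈ ZetaPos w1, φ j ∈ ZetaPos w2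
  inj : ∀ j ∈ ZetaPos w1, ∀ j' ∈ ZetaPos w1, φ j = φ j' → j = j'
  surj : ∀ k ∈ ZetaPos w2, ∃ j ∈ ZetaPos w1, φ j = k
  strands : ∀ j ∈ ZetaPos w1, strandsAt w2 (φ j) = strandsAt w1 j
  order : ∀ j ∈ ZetaPos w1, ∀ j' ∈ ZetaPos w1, j < j' →
    (∃ e e' a, strandsAt w1 j = some e ∧ strandsAt w1 j' = some e' ∧ a ∈ e ∧ a ∈ e') →
    φ j < φ j'
  perm : permOf w1 = permOf w2

/-! ### The groups `F_n` and `FB_n` as presented groups -/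

/-- Generators: `Sum.inl i` is the classical generator `ζ_i`,
`Sum.inr i` is the virtual generator `τ_i`. -/
abbrev GGen (n : ℕ) := Fin (n-1) ⊕ Fin (n-1)

def zg {n : ℕ} (i : Fin (n-1)) : FreeGroup (GGen n) := FreeGroup.of (Sum.inl i)
def tg {n : ℕ} (i : Fin (n-1)) : FreeGroup (GGen n) := FreeGroup.of (Sum.inr i)

/-- The relators of `F_n`. -/
def FRels (n : ℕ) : Set (FreeGroup (GGen n)) :=
  (⋃ i, {zg i * zg i}) ∪ (⋃ i, {tg i * tg i}) ∪
  (⋃ i, {zg i * tg i * (tg i * zg i)⁻¹}) ∪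
  (⋃ (i : Fin (n-1)) (j : Fin (n-1)) (_ : 2 ≤ Nat.dist i j),
    {zg i * zg j * (zg j * zg i)⁻¹, zg i * tg j * (tg j * zg i)⁻¹,
     tg i * tg j * (tg j * tg i)⁻¹}) ∪
  (⋃ (i : Fin (n-1)) (j : Fin (n-1)) (_ : (j:ℕ) = (i:ℕ) + 1),
    {tg i * tg j * tg i * (tg j * tg i * tg j)⁻¹,
     tg i * tg j * zg i * (zg j * tg i * tg j)⁻¹})

/-- The relators of `FB_n`: those of `F_n` together with the classical third
Reidemeister relation. -/
def FBRels (n : ℕ) : Set (FreeGroup (GGen n)) :=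
  FRels n ∪
  (⋃ (i : Fin (n-1)) (j : Fin (n-1)) (_ : (j:ℕ) = (i:ℕ) + 1),
    {zg i * zg j * zg i * (zg j * zg i * zg j)⁻¹})

/-- The group `F_n`. -/
abbrev FGrp (n : ℕ) := PresentedGroup (FRels n)

/-- The free braid group `FB_n`. -/
abbrev FBGrp (n : ℕ) := PresentedGroup (FBRels n)

def zF {n : ℕ} (i : Fin (n-1)) : FGrp n := PresentedGroup.of (Sum.inl i)
def tF {n : ℕ} (i : Fin (n-1)) : FGrp n := PresentedGroup.of (Sum.inr i)

/-- Evaluation of a braid word in `F_n`. -/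
def evalF {n : ℕ} (w : List (Letter n)) : FGrp n :=
  (w.map fun g => match g with
    | Letter.zeta i => zF i
    | Letter.tau i => tF i).prod

/-- For each unordered pair of strands, the mod-2 number of classical letters of `w`
at which these two strands cross (strand labels traced from the top). -/
def crossPar {n : ℕ} : List (Letter n) → Sym2 (Fin n) → ZMod 2
  | [], _ => 0
  | g :: rest, e =>
    (match g with
     | Letter.zeta i => if e = s(lo i, hi i) then (1 : ZMod 2) else 0
     | Letter.tau _ => 0) + crossPar rest (e.map (transOf g))

/-! ### Chord diagrams and the Gaussian parity -/

/-- The setoid on strands given by `SameCycle`; its classes are the orbits of `σ`,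
i.e. the components of the closure. -/
def sameCycleSetoid {n : ℕ} (σ : Equiv.Perm (Fin n)) : Setoid (Fin n) :=
  ⟨σ.SameCycle, ⟨Equiv.Perm.SameCycle.refl σ, Equiv.Perm.SameCycle.symm,
    Equiv.Perm.SameCycle.trans⟩⟩

/-- The rank of a strand in the single cycle of `σ` starting from strand `0`. -/
noncomputable def rankIn {n : ℕ} [NeZero n] (σ : Equiv.Perm (Fin n)) (a : Fin n) : ℕ :=
  ((Function.invFun (fun k : Fin n => (σ ^ (k : ℕ)) 0) a : Fin n) : ℕ)

/-- Coordinates on the core circle of the two endpoints of the chord of the classical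
crossing at position `j` (the circle traverses the strands in the cyclic order of `σ`). -/
noncomputable def chordEnds {n : ℕ} [NeZero n] (w : List (Letter n))
    (σ : Equiv.Perm (Fin n)) (j : ℕ) : ℕ × ℕ :=
  match w[j]? with
  | some (Letter.zeta i) =>
      (rankIn σ ((prefPerm w j)⁻¹ (lo i)) * w.length + j,
       rankIn σ ((prefPerm w j)⁻¹ (hi i)) * w.length + j)
  | _ => (0, 0)

/-- Two chords are linked iff the endpoints of one separate the endpoints of the
other on the core circle. -/
def LinkedChords {n : ℕ} [NeZero n] (w : List (Letter n)) (σ : Equiv.Perm (Fin n))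
    (j k : ℕ) : Prop :=
  Xor' (min (chordEnds w σ j).1 (chordEnds w σ j).2 < (chordEnds w σ k).1 ∧
        (chordEnds w σ k).1 < max (chordEnds w σ j).1 (chordEnds w σ j).2)
       (min (chordEnds w σ j).1 (chordEnds w σ j).2 < (chordEnds w σ k).2 ∧
        (chordEnds w σ k).2 < max (chordEnds w σ j).1 (chordEnds w σ j).2)

/-- The Gaussian parity of the classical crossing at position `j`: the mod-2 number
of chords linked with its chord. Even (`0`) iff linked with evenly many chords. -/
noncomputable def gaussParity {n : ℕ} [NeZero n] (w : List (Letter n))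
    (σ : Equiv.Perm (Fin n)) (j : ℕ) : ZMod 2 :=
  (Nat.card {k : ℕ // k < w.length ∧ k ∈ ZetaPos w ∧ k ≠ j ∧ LinkedChords w σ j k} : ZMod 2)



structure TRel (N : ℕ) {M : Type*} [Monoid M] (t : ℕ → M) : Prop where
  sq : ∀ i, i < N → t i * t i = 1
  far : ∀ i j, i < N → j < N → i + 2 ≤ j → t i * t j = t j * t i
  braid : ∀ i, i + 1 < N → t i * t (i+1) * t i = t (i+1) * t i * t (i+1)

def desc {M : Type*} [Monoid M] (t : ℕ → M) (m : ℕ) : ℕ → M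
  | 0 => 1
  | l+1 => desc t m l * t (m - l)

theorem desc_comm {M : Type*} [Monoid M] {t : ℕ → M} {N : ℕ} (h : TRel N t) (m : ℕ) (hm : m < N)
    (j l : ℕ) (hj : j + l < m) : t j * desc t m l = desc t m l * t j := by
  induction l with
  | zero => simp [desc]
  | succ l ih =>
    have h1 := ih (by omega)
    have h2 := h.far j (m - l) (by omega) (by omega) (by omega)
    simp only [desc]
    rw [← mul_assoc, h1, mul_assoc, h2, mul_assoc]

theorem desc_shift {M : Type*} [Monoid M] {t : ℕ → M} {N : ℕ} (h : TRel N t) (m : ℕ) (hm : m < N)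
    (j l : ℕ) (hl : l ≤ m + 1) (hj : j + 1 ≤ m) (hj2 : m + 1 < j + 1 + l) :
    desc t m l * t (j+1) = t j * desc t m l := by
  induction l with
  | zero => omega
  | succ l ih =>
    by_cases hc : m < j + l
    · have h1 := ih (by omega) (by omega)
      have h2 := h.far (m - l) (j+1) (by omega) (by omega) (by omega)
      simp only [desc]
      rw [mul_assoc, h2, ← mul_assoc, h1, mul_assoc]
    · obtain ⟨l', rfl⟩ : ∃ l', l = l' + 1 := ⟨l - 1, by omega⟩
      have e1 : m - (l' + 1) = j := by omega
      have e2 : m - l' = j + 1 := by omega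
      have h1 := h.braid j (by omega)
      have h2 := desc_comm h m hm j l' (by omega)
      simp only [desc, e1, e2]
      calc desc t m l' * t (j+1) * t j * t (j+1) = desc t m l' * (t (j+1) * t j * t (j+1)) := by
            simp only [mul_assoc]
        _ = desc t m l' * t j * (t (j+1) * t j) := by rw [← h1]; simp only [mul_assoc]
        _ = _ := by rw [← h2]; simp only [mul_assoc]

theorem exists_desc {M : Type*} [Monoid M] {t : ℕ → M} {N : ℕ} (h : TRel N t) (m : ℕ) (hm : m < N)
    (u : List ℕ) (hu : ∀ i ∈ u, i < m + 1) :
    ∃ v : List ℕ, (∀ i ∈ v, i < m) ∧ ∃ l, l ≤ m + 1 ∧ (u.map t).prod = (v.map t).prod * desc t m l := by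
  induction u using List.reverseRecOn with
  | nil => exact ⟨[], by simp, 0, by omega, by simp [desc]⟩
  | append_singleton u j ih =>
    obtain ⟨v, hv, l, hl, e⟩ := ih (fun i hi => hu i (by simp [hi]))
    have hj := hu j (by simp)
    rw [List.map_append, List.prod_append, e]
    simp only [List.map_cons, List.map_nil, List.prod_cons, List.prod_nil, mul_one]
    rcases lt_trichotomy (j + l) m with hc | hc | hc
    · refine ⟨v ++ [j], ?_, l, hl, ?_⟩
      · intro i hi
        simp only [List.mem_append, List.mem_singleton] at hi
        rcases hi with hi | rfl
        · exact hv i hi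
        · omega
      · simp [mul_assoc, desc_comm h m hm j l hc]
    · refine ⟨v, hv, l + 1, by omega, ?_⟩
      simp only [desc]
      rw [show m - l = j by omega, mul_assoc]
    · by_cases hd : j + l = m + 1
      · obtain ⟨l', rfl⟩ : ∃ l', l = l' + 1 := ⟨l - 1, by omega⟩
        refine ⟨v, hv, l', by omega, ?_⟩
        simp only [desc]
        rw [show m - l' = j by omega, mul_assoc, mul_assoc, h.sq j (by omega), mul_one]
      · obtain ⟨j, rfl⟩ : ∃ j', j = j' + 1 := ⟨j - 1, by omega⟩
        refine ⟨v ++ [j], ?_, l, hl, ?_⟩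
        · intro i hi
          simp only [List.mem_append, List.mem_singleton] at hi
          rcases hi with hi | rfl
          · exact hv i hi
          · omega
        · rw [mul_assoc, desc_shift h m hm j l hl (by omega) (by omega)]
          simp [mul_assoc]

def sN (i : ℕ) : Equiv.Perm ℕ := Equiv.swap i (i+1)

theorem sN_rel (N : ℕ) : TRel N sN where
  sq i _ := by simp [sN]
  far i j _ _ h := by
    apply Equiv.Perm.Disjoint.commute
    intro x
    simp only [sN]
    by_cases h1 : x = i ∨ x = i+1
    · right; apply Equiv.swap_apply_of_ne_of_ne <;> omega
    · left; apply Equiv.swap_apply_of_ne_of_ne <;> omega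
  braid i _ := by
    ext x
    simp only [sN, Equiv.Perm.mul_apply, Equiv.swap_apply_def]
    grind

theorem TRel.prod {N : ℕ} {M M' : Type*} [Monoid M] [Monoid M'] {t : ℕ → M} {t' : ℕ → M'}
    (h : TRel N t) (h' : TRel N t') : TRel N (fun i => (t i, t' i)) where
  sq i hi := by simp [h.sq i hi, h'.sq i hi]
  far i j hi hj hh := by simp [h.far i j hi hj hh, h'.far i j hi hj hh]
  braid i hi := by simp [h.braid i hi, h'.braid i hi]

theorem desc_map {M M' : Type*} [Monoid M] [Monoid M'] (f : M →* M') (t : ℕ → M) (m l : ℕ) :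
    f (desc t m l) = desc (f ∘ t) m l := by
  induction l with
  | zero => simp [desc]
  | succ l ih => simp [desc, ih]

theorem desc_sN (m l : ℕ) (hl : l ≤ m + 1) : desc sN m l (m + 1 - l) = m + 1 := by
  induction l with
  | zero => simp [desc]
  | succ l ih =>
    have : sN (m - l) (m + 1 - (l+1)) = m + 1 - l := by
      simp only [sN, Equiv.swap_apply_def]; grind
    simp only [desc, Equiv.Perm.mul_apply, this]
    exact ih (by omega)

theorem fix_sN (m : ℕ) (v : List ℕ) (hv : ∀ i ∈ v, i < m) : (v.map sN).prod (m + 1) = m + 1 := by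
  induction v with
  | nil => simp
  | cons i v ih =>
    have := hv i (by simp)
    simp only [List.map_cons, List.prod_cons, Equiv.Perm.mul_apply]
    rw [ih (fun i hi => hv i (by simp [hi]))]
    simp only [sN]
    apply Equiv.swap_apply_of_ne_of_ne <;> omega

theorem coxeter {M : Type*} [Monoid M] {t : ℕ → M} {N : ℕ} (h : TRel N t) (m : ℕ) (hm : m ≤ N)
    (u : List ℕ) (hu : ∀ i ∈ u, i < m) (hp : ∀ x, x ≤ m → (u.map sN).prod x = x) :
    (u.map t).prod = 1 := by
  induction m generalizing u with
  | zero =>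
    cases u with
    | nil => simp
    | cons a u => exact absurd (hu a (by simp)) (by omega)
  | succ m ih =>
    obtain ⟨v, hv, l, hl, e⟩ := exists_desc (h.prod (sN_rel N)) m (by omega) u hu
    have e1 := congrArg (MonoidHom.fst M (Equiv.Perm ℕ)) e
    have e2 := congrArg (MonoidHom.snd M (Equiv.Perm ℕ)) e
    rw [map_mul, desc_map, map_list_prod, map_list_prod, List.map_map, List.map_map] at e1 e2
    change (u.map t).prod = (v.map t).prod * desc t m l at e1
    change (u.map sN).prod = (v.map sN).prod * desc sN m l at e2
    have h3 := hp (m + 1 - l) (by omega)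
    rw [e2, Equiv.Perm.mul_apply, desc_sN m l hl, fix_sN m v hv] at h3
    obtain rfl : l = 0 := by omega
    simp only [desc, mul_one] at e1 e2
    rw [e1]
    exact ih (by omega) v hv (fun x hx => by rw [← e2]; exact hp x (by omega))

/-! crossings -/
structure ZRel (N : ℕ) {M : Type*} [Monoid M] (t z : ℕ → M) : Prop extends TRel N t where
  virt : ∀ i, i < N → z i * t i = t i * z i
  zfar : ∀ i j, i < N → j < N → (i + 2 ≤ j ∨ j + 2 ≤ i) → z i * t j = t j * z i
  zzfar : ∀ i j, i < N → j < N → i + 2 ≤ j → z i * z j = z j * z i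
  semi : ∀ i, i + 1 < N → t i * t (i+1) * z i = z (i+1) * t i * t (i+1)

def xx {M : Type*} [Monoid M] (t z : ℕ → M) (a : ℕ) : ℕ → M
  | 0 => z a * t a
  | d+1 => t (a+d+1) * xx t z a d * t (a+d+1)

section
variable {M : Type*} [Monoid M] {t z : ℕ → M} {N : ℕ}

theorem conj_sq (h : TRel N t) {i : ℕ} (hi : i < N) (y : M) : t i * (t i * y * t i) * t i = y := by
  calc _ = (t i * t i) * y * (t i * t i) := by simp only [mul_assoc]
    _ = y := by simp [h.sq i hi]

theorem conj_far (h : TRel N t) {i j : ℕ} (hi : i < N) (hj : j < N) (hij : i + 2 ≤ j ∨ j + 2 ≤ i)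
    (y : M) : t i * (t j * y * t j) * t i = t j * (t i * y * t i) * t j := by
  have e : t i * t j = t j * t i := by
    rcases hij with hh | hh
    · exact h.far i j hi hj hh
    · exact (h.far j i hj hi hh).symm
  calc _ = (t i * t j) * y * (t j * t i) := by simp only [mul_assoc]
    _ = (t j * t i) * y * (t i * t j) := by rw [e]
    _ = _ := by simp only [mul_assoc]

theorem conj_braid (h : TRel N t) {i : ℕ} (hi : i + 1 < N) (y : M) :
    t i * (t (i+1) * (t i * y * t i) * t (i+1)) * t i
     = t (i+1) * (t i * (t (i+1) * y * t (i+1)) * t i) * t (i+1) := by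
  have e := h.braid i hi
  calc _ = (t i * t (i+1) * t i) * y * (t i * t (i+1) * t i) := by simp only [mul_assoc]
    _ = (t (i+1) * t i * t (i+1)) * y * (t (i+1) * t i * t (i+1)) := by rw [e]
    _ = _ := by simp only [mul_assoc]

theorem x0_far (h : ZRel N t z) {i a : ℕ} (hi : i < N) (ha : a < N) (hij : i + 2 ≤ a ∨ a + 2 ≤ i) :
    t i * (z a * t a) * t i = z a * t a := by
  have e : t i * t a = t a * t i := by
    rcases hij with hh | hh
    · exact h.far i a hi ha hh
    · exact (h.far a i ha hi hh).symm
  have e2 := h.zfar a i ha hi hij.symm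
  rw [← mul_assoc, ← e2, mul_assoc, mul_assoc, ← mul_assoc (t i), e, mul_assoc, h.sq i hi, mul_one]

theorem xx_far (h : ZRel N t z) {i a : ℕ} (d : ℕ) (hi : i < N) (ha : a + d < N)
    (hij : i + 2 ≤ a ∨ a + d + 2 ≤ i) :
    t i * xx t z a d * t i = xx t z a d := by
  induction d with
  | zero => exact x0_far h hi ha (by omega)
  | succ d ih =>
    simp only [xx]
    rw [conj_far h.toTRel hi (by omega) (by omega), ih (by omega) (by omega)]

theorem xx_mid (h : ZRel N t z) {i a : ℕ} (d : ℕ) (hi : i < N) (ha : a + d < N)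
    (h1 : a < i) (h2 : i < a + d) :
    t i * xx t z a d * t i = xx t z a d := by
  induction d with
  | zero => omega
  | succ d ih =>
    by_cases hc : i < a + d
    · simp only [xx]
      rw [conj_far h.toTRel hi (by omega) (by omega), ih (by omega) (by omega)]
    · obtain ⟨d', rfl⟩ : ∃ d', d = d' + 1 := ⟨d - 1, by omega⟩
      obtain rfl : i = a + d' + 1 := by omega
      simp only [xx]
      rw [← add_assoc a d' 1, conj_braid h.toTRel (by omega), xx_far h d' (by omega) (by omega) (by omega)]

theorem xx_self (h : ZRel N t z) {a : ℕ} (ha : a < N) :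
    t a * xx t z a 0 * t a = xx t z a 0 := by
  simp only [xx]
  rw [h.virt a ha, ← mul_assoc, h.sq a ha, one_mul]
  exact h.virt a ha

theorem xx_left (h : ZRel N t z) {a : ℕ} (d : ℕ) (ha : a + d + 1 < N) :
    t a * xx t z a (d+1) * t a = xx t z (a+1) d := by
  induction d with
  | zero =>
    simp only [xx, add_zero]
    have e := h.semi a ha
    have b := h.braid a ha
    calc _ = (t a * t (a+1) * z a) * t a * t (a+1) * t a := by simp only [mul_assoc]
      _ = z (a+1) * (t a * t (a+1) * t a) * t (a+1) * t a := by rw [e]; simp only [mul_assoc]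
      _ = z (a+1) * t (a+1) * (t a * ((t (a+1) * t (a+1)) * t a)) := by rw [b]; simp only [mul_assoc]
      _ = _ := by rw [h.sq _ ha, one_mul, h.sq a (by omega), mul_one]
  | succ d ih =>
    rw [xx, conj_far h.toTRel (by omega) (by omega) (by omega), ih (by omega), xx]
    rw [show a + (d+1) + 1 = a + 1 + d + 1 by omega]

/-- element attached to a pair of strands -/
def yy (t z : ℕ → M) (a b : ℕ) : M :=
  if a < b then xx t z a (b - a - 1) else if b < a then xx t z b (a - b - 1) else 1

theorem yy_symm (a b : ℕ) : yy t z a b = yy t z b a := by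
  unfold yy
  split_ifs <;> first | rfl | omega

theorem yy_conj_lt (h : ZRel N t z) {i a b : ℕ} (hi : i < N) (hab : a < b) (hb : b ≤ N) :
    t i * yy t z a b * t i = yy t z (sN i a) (sN i b) := by
  obtain ⟨d, rfl⟩ : ∃ d, b = a + d + 1 := ⟨b - a - 1, by omega⟩
  have hy : ∀ a d, yy t z a (a+d+1) = xx t z a d := by
    intro a d
    unfold yy
    rw [if_pos (by omega)]; congr 1; omega
  have sne : ∀ x, x ≠ i → x ≠ i + 1 → sN i x = x := fun x h1 h2 =>
    Equiv.swap_apply_of_ne_of_ne h1 h2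
  have s1 : sN i i = i + 1 := Equiv.swap_apply_left _ _
  have s2 : sN i (i+1) = i := Equiv.swap_apply_right _ _
  rw [hy]
  rcases lt_trichotomy (i + 1) a with hc | rfl | hc
  · rw [xx_far h d hi (by omega) (by omega), sne a (by omega) (by omega),
      sne _ (by omega) (by omega), hy]
  · rw [s2, sne _ (by omega) (by omega), ← xx_left h d (by omega), conj_sq h.toTRel hi]
    rw [show i + 1 + d + 1 = i + (d + 1) + 1 by omega, hy]
  · rcases Nat.lt_or_ge a i with hd | hd
    · rw [sne a (by omega) (by omega)]
      rcases lt_trichotomy i (a + d) with he | rfl | he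
      · rw [xx_mid h d hi (by omega) hd he, sne _ (by omega) (by omega), hy]
      · rw [s2]
        obtain ⟨d, rfl⟩ : ∃ d', d = d' + 1 := ⟨d - 1, by omega⟩
        rw [xx, ← add_assoc, conj_sq h.toTRel (by omega), hy]
      · by_cases hf : i = a + d + 1
        · subst hf
          rw [s1, show a + d + 1 + 1 = a + (d+1) + 1 by omega, hy, xx]
        · rw [xx_far h d hi (by omega) (by omega), sne _ (by omega) (by omega), hy]
    · obtain rfl : a = i := by omega
      cases d with
      | zero => rw [xx_self h hi, s1, add_zero, s2, yy_symm, ← hy a 0, add_zero]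
      | succ d =>
        rw [xx_left h d (by omega), s1, sne _ (by omega) (by omega),
          show a + (d + 1) + 1 = a + 1 + d + 1 by omega, hy]

theorem yy_conj (h : ZRel N t z) {i a b : ℕ} (hi : i < N) (ha : a ≤ N) (hb : b ≤ N) :
    t i * yy t z a b * t i = yy t z (sN i a) (sN i b) := by
  rcases lt_trichotomy a b with hc | rfl | hc
  · exact yy_conj_lt h hi hc hb
  · simp [yy, h.sq i hi]
  · rw [yy_symm, yy_conj_lt h hi hc ha, yy_symm]
end

/-! lists -/
def OIso {α : Type*} (L1 L2 : List (Option (Sym2 α))) (φ : ℕ → ℕ) : Prop :=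
  (∀ j e, L1[j]? = some (some e) → L2[φ j]? = some (some e)) ∧
  (∀ j j' e e', L1[j]? = some (some e) → L1[j']? = some (some e') → φ j = φ j' → j = j') ∧
  (∀ k e, L2[k]? = some (some e) → ∃ j, L1[j]? = some (some e) ∧ φ j = k) ∧
  (∀ j j' e e' a, L1[j]? = some (some e) → L1[j']? = some (some e') → j < j' → a ∈ e → a ∈ e' →
    φ j < φ j')

def OR {α : Type*} (L1 L2 : List (Option (Sym2 α))) : Prop := ∃ φ, OIso L1 L2 φ

def oprod {α M : Type*} [Monoid M] (f : α → M) (L : List (Option α)) : M :=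
  (L.map (fun o => o.elim 1 f)).prod

theorem oprod_nil {α M : Type*} [Monoid M] (f : α → M) : oprod f [] = 1 := by simp [oprod]
theorem oprod_none {α M : Type*} [Monoid M] (f : α → M) (L) : oprod f (none :: L) = oprod f L := by
  simp [oprod]
theorem oprod_some {α M : Type*} [Monoid M] (f : α → M) (e L) :
    oprod f (some e :: L) = f e * oprod f L := by
  simp [oprod]

theorem oprod_pull {α M : Type*} [Monoid M] (f : α → M) (L : List (Option α)) (k : ℕ) (e : α)
    (hk : L[k]? = some (some e))
    (hc : ∀ k' e', k' < k → L[k']? = some (some e') → f e' * f e = f e * f e') :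
    oprod f L = f e * oprod f (L.set k none) := by
  induction L generalizing k with
  | nil => simp at hk
  | cons o L ih =>
    cases k with
    | zero =>
      simp at hk
      subst hk
      simp [oprod_some, oprod_none]
    | succ k =>
      have := ih k (by simpa using hk) (fun k' e' h1 h2 => hc (k'+1) e' (by omega) (by simpa using h2))
      rw [List.set_cons_succ]
      cases o with
      | none => simp only [oprod_none, this]
      | some e' =>
        simp only [oprod_some]
        rw [this, ← mul_assoc, hc 0 e' (by omega) (by simp), mul_assoc]

theorem oprod_eq {α M : Type*} [Monoid M] (f : Sym2 α → M)
    (hf : ∀ e e', (∀ a, a ∈ e → a ∉ e') → f e * f e' = f e' * f e)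
    (L1 L2 : List (Option (Sym2 α))) (φ : ℕ → ℕ) (h : OIso L1 L2 φ) : oprod f L1 = oprod f L2 := by
  induction L1 generalizing L2 φ with
  | nil =>
    obtain ⟨_, _, h3, _⟩ := h
    have : ∀ o ∈ L2, o = none := by
      intro o ho
      obtain ⟨k, hk⟩ := List.mem_iff_getElem?.1 ho
      cases o with
      | none => rfl
      | some e =>
        obtain ⟨j, hj, _⟩ := h3 k e hk
        simp at hj
    rw [oprod_nil]
    symm
    apply List.prod_eq_one
    intro x hx
    obtain ⟨o, ho, rfl⟩ := List.mem_map.1 hx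
    rw [this o ho]; rfl
  | cons o L1 ih =>
    obtain ⟨h1, h2, h3, h4⟩ := h
    cases o with
    | none =>
      rw [oprod_none]
      apply ih L2 (fun j => φ (j+1))
      refine ⟨fun j e hj => h1 (j+1) e (by simpa using hj), fun j j' e e' hj hj' hh => ?_, ?_,
        fun j j' e e' a hj hj' hl => h4 (j+1) (j'+1) e e' a (by simpa using hj) (by simpa using hj')
          (by omega)⟩
      · have := h2 (j+1) (j'+1) e e' (by simpa using hj) (by simpa using hj') hh
        omega
      · intro k e hk
        obtain ⟨j, hj, hh⟩ := h3 k e hk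
        cases j with
        | zero => simp at hj
        | succ j => exact ⟨j, by simpa using hj, hh⟩
    | some e =>
      have hk := h1 0 e (by simp)
      rw [oprod_some, oprod_pull f L2 (φ 0) e hk]
      · congr 1
        apply ih _ (fun j => φ (j+1))
        refine ⟨fun j e' hj => ?_, fun j j' e e' hj hj' hh => ?_, ?_,
          fun j j' e e' a hj hj' hl => h4 (j+1) (j'+1) e e' a (by simpa using hj) (by simpa using hj')
            (by omega)⟩
        · have hne : φ 0 ≠ φ (j+1) := fun hh => by
            have := h2 0 (j+1) e e' (by simp) (by simpa using hj) hh
            omega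
          rw [List.getElem?_set_ne hne]
          exact h1 (j+1) e' (by simpa using hj)
        · have := h2 (j+1) (j'+1) e e' (by simpa using hj) (by simpa using hj') hh
          omega
        · intro k e' hk'
          have hne : φ 0 ≠ k := by
            rintro rfl
            have hlt : φ 0 < L2.length := (List.getElem?_eq_some_iff.1 hk).1
            rw [List.getElem?_set_self hlt] at hk'
            simp at hk'
          rw [List.getElem?_set_ne hne] at hk'
          obtain ⟨j, hj, hh⟩ := h3 k e' hk'
          cases j with
          | zero => exact absurd hh hne
          | succ j => exact ⟨j, by simpa using hj, hh⟩
      · intro k' e' hlt hk'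
        apply hf
        intro a ha ha'
        obtain ⟨j, hj, rfl⟩ := h3 k' e' hk'
        cases j with
        | zero => omega
        | succ j =>
          have := h4 0 (j+1) e e' a (by simp) hj (by omega) ha' ha
          omega

theorem OR.refl {α : Type*} (L : List (Option (Sym2 α))) : OR L L :=
  ⟨id, fun _ _ h => h, fun _ _ _ _ _ _ h => h, fun k _ h => ⟨k, h, rfl⟩, fun _ _ _ _ _ _ _ h _ _ => h⟩

theorem OR.trans {α : Type*} {L1 L2 L3 : List (Option (Sym2 α))} (h : OR L1 L2) (h' : OR L2 L3) :
    OR L1 L3 := by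
  obtain ⟨φ, h1, h2, h3, h4⟩ := h
  obtain ⟨ψ, g1, g2, g3, g4⟩ := h'
  refine ⟨ψ ∘ φ, fun j e hj => g1 _ _ (h1 j e hj), fun j j' e e' hj hj' hh =>
    h2 j j' e e' hj hj' (g2 _ _ e e' (h1 j e hj) (h1 j' e' hj') hh), ?_,
    fun j j' e e' a hj hj' hl ha ha' => g4 _ _ e e' a (h1 j e hj) (h1 j' e' hj')
      (h4 j j' e e' a hj hj' hl ha ha') ha ha'⟩
  intro k e hk
  obtain ⟨j, hj, rfl⟩ := g3 k e hk
  obtain ⟨i, hi, rfl⟩ := h3 j e hj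
  exact ⟨i, hi, rfl⟩

theorem OR.symm {α : Type*} {L1 L2 : List (Option (Sym2 α))} (h : OR L1 L2) : OR L2 L1 := by
  obtain ⟨φ, h1, h2, h3, h4⟩ := h
  have : ∀ k, ∃ j, ∀ e, L2[k]? = some (some e) → L1[j]? = some (some e) ∧ φ j = k := by
    intro k
    by_cases hk : ∃ e, L2[k]? = some (some e)
    · obtain ⟨e, he⟩ := hk
      obtain ⟨j, hj, hh⟩ := h3 k e he
      refine ⟨j, fun e' he' => ?_⟩
      rw [he] at he'
      simp only [Option.some.injEq] at he'
      subst he'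
      exact ⟨hj, hh⟩
    · exact ⟨0, fun e he => absurd ⟨e, he⟩ hk⟩
  choose ψ hψ using this
  refine ⟨ψ, fun k e hk => (hψ k e hk).1, fun k k' e e' hk hk' hh => ?_, fun j e hj => ?_, ?_⟩
  · rw [← (hψ k e hk).2, ← (hψ k' e' hk').2, hh]
  · exact ⟨φ j, h1 j e hj, h2 _ _ e e (hψ _ e (h1 j e hj)).1 hj (hψ _ e (h1 j e hj)).2⟩
  · intro k k' e e' a hk hk' hl ha ha'
    obtain ⟨a1, a2⟩ := hψ k e hk
    obtain ⟨b1, b2⟩ := hψ k' e' hk'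
    by_contra hcon
    rcases Nat.lt_or_ge (ψ k') (ψ k) with hc | hc
    · have := h4 _ _ e' e a b1 a1 hc ha' ha
      omega
    · have : ψ k = ψ k' := by omega
      rw [this] at a2
      omega

theorem OR.cons {α : Type*} {L1 L2 : List (Option (Sym2 α))} (o) (h : OR L1 L2) :
    OR (o :: L1) (o :: L2) := by
  obtain ⟨φ, h1, h2, h3, h4⟩ := h
  refine ⟨fun j => match j with | 0 => 0 | j+1 => φ j + 1, ?_, ?_, ?_, ?_⟩
  · rintro (_ | j) e hj
    · simpa using hj
    · simpa using h1 j e (by simpa using hj)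
  · rintro (_ | j) (_ | j') e e' hj hj' hh
    · rfl
    · simp at hh
    · simp at hh
    · have := h2 j j' e e' (by simpa using hj) (by simpa using hj') (by simpa using hh)
      omega
  · rintro (_ | k) e hk
    · exact ⟨0, by simpa using hk, rfl⟩
    · obtain ⟨j, hj, rfl⟩ := h3 k e (by simpa using hk)
      exact ⟨j+1, by simpa using hj, rfl⟩
  · rintro (_ | j) (_ | j') e e' a hj hj' hl ha ha'
    · omega
    · simp
    · omega
    · have := h4 j j' e e' a (by simpa using hj) (by simpa using hj') (by omega) ha ha'
      simpa using this

theorem OR.none {α : Type*} (L : List (Option (Sym2 α))) : OR (none :: L) L := by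
  refine ⟨fun j => j - 1, ?_, ?_, ?_, ?_⟩
  · rintro (_ | j) e hj
    · simp at hj
    · simpa using hj
  · rintro (_ | j) (_ | j') e e' hj hj' hh
    · rfl
    · simp at hj
    · simp at hj'
    · simpa using hh
  · intro k e hk
    exact ⟨k+1, by simpa using hk, rfl⟩
  · rintro (_ | j) (_ | j') e e' a hj hj' hl ha ha'
    · omega
    · simp at hj
    · omega
    · simpa using hl

theorem OR.swap {α : Type*} (e e' : Sym2 α) (h : ∀ a, a ∈ e → a ∉ e') (L : List (Option (Sym2 α))) :
    OR (some e :: some e' :: L) (some e' :: some e :: L) := by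
  refine ⟨fun j => match j with | 0 => 1 | 1 => 0 | j+2 => j+2, ?_, ?_, ?_, ?_⟩
  · rintro (_ | _ | j) e hj <;> simpa using hj
  · rintro (_ | _ | j) (_ | _ | j') e e' hj hj' hh <;> simp at hh ⊢ <;> omega
  · rintro (_ | _ | k) e hk
    · exact ⟨1, by simpa using hk, rfl⟩
    · exact ⟨0, by simpa using hk, rfl⟩
    · exact ⟨k+2, by simpa using hk, rfl⟩
  · rintro (_ | _ | j) (_ | _ | j') f f' a hj hj' hl ha ha' <;> simp at hj hj' hl ⊢
    · subst hj hj'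
      exact h a ha ha'
    · omega

theorem OR.map {α : Type*} {L1 L2 : List (Option (Sym2 α))} (g : α ≃ α) (h : OR L1 L2) :
    OR (L1.map (Option.map (Sym2.map g))) (L2.map (Option.map (Sym2.map g))) := by
  obtain ⟨φ, h1, h2, h3, h4⟩ := h
  have key : ∀ (L : List (Option (Sym2 α))) (j : ℕ) (e : Sym2 α), (L.map (Option.map (Sym2.map g)))[j]? = some (some e) →
      ∃ e0, L[j]? = some (some e0) ∧ Sym2.map g e0 = e := by
    intro L j e hj
    rw [List.getElem?_map, Option.map_eq_some_iff] at hj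
    obtain ⟨o, ho, h⟩ := hj
    rw [Option.map_eq_some_iff] at h
    obtain ⟨e0, rfl, h⟩ := h
    exact ⟨e0, ho, h⟩
  have key2 : ∀ (L : List (Option (Sym2 α))) (j : ℕ) (e : Sym2 α), L[j]? = some (some e) →
      (L.map (Option.map (Sym2.map g)))[j]? = some (some (e.map g)) := by
    intro L j e hj
    simp [hj]
  refine ⟨φ, ?_, ?_, ?_, ?_⟩
  · intro j e hj
    obtain ⟨e, hj0, rfl⟩ := key _ _ _ hj
    exact key2 _ _ _ (h1 _ _ hj0)
  · intro j j' e e' hj hj'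
    obtain ⟨e, hj0, rfl⟩ := key _ _ _ hj
    obtain ⟨e', hj0', rfl⟩ := key _ _ _ hj'
    exact h2 _ _ _ _ hj0 hj0'
  · intro k e hk
    obtain ⟨e, hk0, rfl⟩ := key _ _ _ hk
    obtain ⟨j, hj, hh⟩ := h3 _ _ hk0
    exact ⟨j, key2 _ _ _ hj, hh⟩
  · intro j j' e e' a hj hj' hl ha ha'
    obtain ⟨e, hj0, rfl⟩ := key _ _ _ hj
    obtain ⟨e', hj0', rfl⟩ := key _ _ _ hj'
    obtain ⟨b, hb, rfl⟩ := Sym2.mem_map.1 ha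
    obtain ⟨c, hc, hbc⟩ := Sym2.mem_map.1 ha'
    obtain rfl := g.injective hbc
    exact h4 _ _ _ _ c hj0 hj0' hl hb hc

/-! words -/
def lab {n : ℕ} : Letter n → Option (Sym2 (Fin n))
  | .zeta i => some s(lo i, hi i)
  | .tau _ => none

def dd {n : ℕ} : List (Letter n) → List (Option (Sym2 (Fin n)))
  | [] => []
  | g :: w => lab g :: (dd w).map (Option.map (Sym2.map (transOf g)))

theorem transOf_inv {n : ℕ} (g : Letter n) : (transOf g)⁻¹ = transOf g := by
  simp [transOf, sPerm]

theorem prefPerm_succ {n : ℕ} (g : Letter n) (w : List (Letter n)) (j : ℕ) :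
    prefPerm (g :: w) (j+1) = prefPerm w j * transOf g := by
  simp [prefPerm]

theorem permOf_cons {n : ℕ} (g : Letter n) (w : List (Letter n)) :
    permOf (g :: w) = permOf w * transOf g := by
  simp [permOf]

theorem permOf_append {n : ℕ} (w w' : List (Letter n)) :
    permOf (w ++ w') = permOf w' * permOf w := by
  simp [permOf]

theorem strandsAt_succ {n : ℕ} (g : Letter n) (w : List (Letter n)) (j : ℕ) :
    strandsAt (g :: w) (j+1) = (strandsAt w j).map (Sym2.map (transOf g)) := by
  unfold strandsAt
  rw [prefPerm_succ, mul_inv_rev, transOf_inv]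
  simp only [List.getElem?_cons_succ, Option.map_map]
  congr 1

theorem dd_get {n : ℕ} (w : List (Letter n)) (j : ℕ) (e : Sym2 (Fin n)) :
    (dd w)[j]? = some (some e) ↔ j ∈ ZetaPos w ∧ strandsAt w j = some e := by
  induction w generalizing j e with
  | nil => simp [dd, strandsAt]
  | cons g w ih =>
    cases j with
    | zero =>
      cases g with
      | zeta i => simp [dd, lab, ZetaPos, strandsAt, prefPerm, Letter.idx]
      | tau i => simp [dd, lab, ZetaPos]
    | succ j =>
      rw [strandsAt_succ]
      simp only [dd, List.getElem?_cons_succ, List.getElem?_map, Option.map_eq_some_iff]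
      constructor
      · rintro ⟨o, ho, e0, rfl, rfl⟩
        obtain ⟨h1, h2⟩ := (ih j e0).1 ho
        exact ⟨by simpa [ZetaPos] using h1, e0, h2, rfl⟩
      · rintro ⟨h1, e0, h2, rfl⟩
        exact ⟨some e0, (ih j e0).2 ⟨by simpa [ZetaPos] using h1, h2⟩, e0, rfl, rfl⟩

theorem zeta_strands {n : ℕ} {w : List (Letter n)} {j : ℕ} (h : j ∈ ZetaPos w) :
    ∃ e, (dd w)[j]? = some (some e) := by
  obtain ⟨i, hh⟩ := h
  refine ⟨s((prefPerm w j)⁻¹ (lo i), (prefPerm w j)⁻¹ (hi i)), (dd_get _ _ _).2 ⟨⟨i, hh⟩, ?_⟩⟩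
  simp [strandsAt, hh, Letter.idx]

theorem gamma_iff {n : ℕ} (w1 w2 : List (Letter n)) (φ : ℕ → ℕ) :
    IsGammaIso w1 w2 φ ↔ OIso (dd w1) (dd w2) φ ∧ permOf w1 = permOf w2 := by
  constructor
  · intro h
    refine ⟨⟨?_, ?_, ?_, ?_⟩, h.perm⟩
    · intro j e hj
      rw [dd_get] at hj ⊢
      exact ⟨h.maps j hj.1, by rw [h.strands j hj.1, hj.2]⟩
    · intro j j' e e' hj hj'
      rw [dd_get] at hj hj'
      exact h.inj j hj.1 j' hj'.1
    · intro k e hk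
      rw [dd_get] at hk
      obtain ⟨j, hj, rfl⟩ := h.surj k hk.1
      exact ⟨j, (dd_get _ _ _).2 ⟨hj, by rw [← h.strands j hj, hk.2]⟩, rfl⟩
    · intro j j' e e' a hj hj' hl ha ha'
      rw [dd_get] at hj hj'
      exact h.order j hj.1 j' hj'.1 hl ⟨e, e', a, hj.2, hj'.2, ha, ha'⟩
  · rintro ⟨⟨h1, h2, h3, h4⟩, hp⟩
    refine ⟨?_, ?_, ?_, ?_, ?_, hp⟩
    · intro j hj
      obtain ⟨e, he⟩ := zeta_strands hj
      exact ((dd_get _ _ _).1 (h1 j e he)).1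
    · intro j hj j' hj' hh
      obtain ⟨e, he⟩ := zeta_strands hj
      obtain ⟨e', he'⟩ := zeta_strands hj'
      exact h2 j j' e e' he he' hh
    · intro k hk
      obtain ⟨e, he⟩ := zeta_strands hk
      obtain ⟨j, hj, hh⟩ := h3 k e he
      exact ⟨j, ((dd_get _ _ _).1 hj).1, hh⟩
    · intro j hj
      obtain ⟨e, he⟩ := zeta_strands hj
      rw [((dd_get _ _ _).1 (h1 j e he)).2, ((dd_get _ _ _).1 he).2]
    · rintro j hj j' hj' hl ⟨e, e', a, he, he', ha, ha'⟩
      exact h4 j j' e e' a ((dd_get _ _ _).2 ⟨hj, he⟩) ((dd_get _ _ _).2 ⟨hj', he'⟩) hl ha ha'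

theorem omap_map {α : Type*} (f g : Equiv.Perm α) (L : List (Option (Sym2 α))) :
    (L.map (Option.map (Sym2.map f))).map (Option.map (Sym2.map g))
      = L.map (Option.map (Sym2.map (g * f : Equiv.Perm α))) := by
  rw [List.map_map]
  congr 1
  funext o
  cases o with
  | none => rfl
  | some e => simp [Sym2.map_map]

theorem omap_one {α : Type*} (L : List (Option (Sym2 α))) :
    L.map (Option.map (Sym2.map (1 : Equiv.Perm α))) = L := by
  have : Option.map (Sym2.map ⇑(1 : Equiv.Perm α)) = id := by
    funext o
    cases o with
    | none => rfl
    | some e => simp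
  rw [this, List.map_id]

theorem sPerm_val {n : ℕ} (i : Fin (n-1)) (x : Fin n) : ((sPerm i x : Fin n) : ℕ) = sN i x := by
  simp only [sPerm, sN, Equiv.swap_apply_def, lo, hi, Fin.ext_iff]
  split_ifs <;> rfl

theorem s_sq {n : ℕ} (i : Fin (n-1)) : sPerm i * sPerm i = 1 := by simp [sPerm]

theorem s_far {n : ℕ} (i j : Fin (n-1)) (h : 2 ≤ Nat.dist i j) :
    sPerm i * sPerm j = sPerm j * sPerm i := by
  ext x
  simp only [Equiv.Perm.mul_apply, sPerm_val]
  have hd : (i:ℕ) + 2 ≤ j ∨ (j:ℕ) + 2 ≤ i := by simp only [Nat.dist] at h; omega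
  rcases hd with hd | hd
  · have := (sN_rel n).far i j (by omega) (by omega) hd
    exact congrArg (fun p : Equiv.Perm ℕ => p x) this
  · have := ((sN_rel n).far j i (by omega) (by omega) hd).symm
    exact congrArg (fun p : Equiv.Perm ℕ => p x) this

theorem s_braid {n : ℕ} (i j : Fin (n-1)) (h : (j:ℕ) = i + 1) :
    sPerm i * sPerm j * sPerm i = sPerm j * sPerm i * sPerm j := by
  ext x
  simp only [Equiv.Perm.mul_apply, sPerm_val, h]
  exact congrArg (fun p : Equiv.Perm ℕ => p x) ((sN_rel n).braid i (by omega))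

theorem s_far_fix {n : ℕ} (i j : Fin (n-1)) (h : 2 ≤ Nat.dist i j) :
    sPerm i (lo j) = lo j ∧ sPerm i (hi j) = hi j := by
  have hd : (i:ℕ) + 2 ≤ j ∨ (j:ℕ) + 2 ≤ i := by simp only [Nat.dist] at h; omega
  constructor <;> apply Equiv.swap_apply_of_ne_of_ne <;> simp [lo, hi, Fin.ext_iff] <;> omega

theorem rel_perm {n : ℕ} {r1 r2 : List (Letter n)} (h : RelStrong n r1 r2) :
    permOf r1 = permOf r2 := by
  cases h with
  | tt i => simp [permOf, transOf, Letter.idx, s_sq]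
  | virt i => simp [permOf, transOf, Letter.idx]
  | far_zz i j h => simp [permOf, transOf, Letter.idx, s_far i j h]
  | far_zt i j h => simp [permOf, transOf, Letter.idx, s_far i j h]
  | far_tt i j h => simp [permOf, transOf, Letter.idx, s_far i j h]
  | r3v i j h => simpa [permOf, transOf, Letter.idx, mul_assoc] using s_braid i j h
  | semi i j h => simpa [permOf, transOf, Letter.idx, mul_assoc] using s_braid i j h

theorem rel_OR {n : ℕ} {r1 r2 : List (Letter n)} (h : RelStrong n r1 r2) (B : List (Letter n)) :
    OR (dd (r1 ++ B)) (dd (r2 ++ B)) := by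
  cases h with
  | tt i =>
    simp only [List.cons_append, List.nil_append, dd, lab, transOf, Letter.idx, List.map_cons,
      Option.map_none, omap_map, s_sq, omap_one]
    exact (OR.none _).trans (OR.none _)
  | virt i =>
    simp only [List.cons_append, List.nil_append, dd, lab, transOf, Letter.idx, List.map_cons,
      Option.map_none, omap_map, s_sq, omap_one, Option.map_some, Sym2.map_mk]
    have h1 : sPerm i (lo i) = hi i := Equiv.swap_apply_left _ _
    have h2 : sPerm i (hi i) = lo i := Equiv.swap_apply_right _ _
    rw [h1, h2, Sym2.eq_swap]
    exact ((OR.none _).cons _).trans (OR.none _).symm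
  | far_zz i j h =>
    have h' : 2 ≤ Nat.dist j i := by rwa [Nat.dist_comm]
    simp only [List.cons_append, List.nil_append, dd, lab, transOf, Letter.idx, List.map_cons,
      Option.map_none, omap_map, Option.map_some, Sym2.map_mk, s_far i j h,
      s_far_fix i j h, s_far_fix j i h']
    apply OR.swap
    have hd : (i:ℕ) + 2 ≤ j ∨ (j:ℕ) + 2 ≤ i := by simp only [Nat.dist] at h; omega
    intro a ha ha'
    simp only [Sym2.mem_iff, lo, hi, Fin.ext_iff] at ha ha'
    omega
  | far_zt i j h =>
    have h' : 2 ≤ Nat.dist j i := by rwa [Nat.dist_comm]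
    simp only [List.cons_append, List.nil_append, dd, lab, transOf, Letter.idx, List.map_cons,
      Option.map_none, omap_map, Option.map_some, Sym2.map_mk, s_far i j h,
      s_far_fix i j h, s_far_fix j i h']
    exact ((OR.none _).cons _).trans (OR.none _).symm
  | far_tt i j h =>
    simp only [List.cons_append, List.nil_append, dd, lab, transOf, Letter.idx, List.map_cons,
      Option.map_none, omap_map, s_far i j h]
    exact OR.refl _
  | r3v i j h =>
    simp only [List.cons_append, List.nil_append, dd, lab, transOf, Letter.idx, List.map_cons,
      Option.map_none, omap_map, ← mul_assoc, s_braid i j h]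
    exact OR.refl _
  | semi i j h =>
    simp only [List.cons_append, List.nil_append, dd, lab, transOf, Letter.idx, List.map_cons,
      Option.map_none, omap_map, ← mul_assoc, s_braid i j h, Option.map_some, Sym2.map_mk]
    have h1 : sPerm i (sPerm j (lo i)) = lo j := by
      ext; rw [sPerm_val, sPerm_val]
      simp only [sN, lo, Equiv.swap_apply_def]; grind
    have h2 : sPerm i (sPerm j (hi i)) = hi j := by
      ext; rw [sPerm_val, sPerm_val]
      simp only [sN, hi, Equiv.swap_apply_def]; grind
    rw [h1, h2]
    exact ((OR.none _).trans (OR.none _)).trans ((((OR.none _).trans (OR.none _)).cons _).symm)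

theorem step_OR {n : ℕ} {w1 w2 : List (Letter n)} (h : StepOf (RelStrong n) w1 w2) :
    OR (dd w1) (dd w2) ∧ permOf w1 = permOf w2 := by
  obtain ⟨A, B, r1, r2, h, rfl, rfl⟩ := h
  constructor
  · rw [List.append_assoc, List.append_assoc]
    induction A with
    | nil => exact rel_OR h B
    | cons g A ih => exact (OR.map (transOf g) ih).cons (lab g)
  · simp only [permOf_append, rel_perm h]

theorem strong_OR {n : ℕ} {w1 w2 : List (Letter n)} (h : StrongEq w1 w2) :
    OR (dd w1) (dd w2) ∧ permOf w1 = permOf w2 := by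
  induction h with
  | rel _ _ h => exact step_OR h
  | refl _ => exact ⟨OR.refl _, rfl⟩
  | symm _ _ _ ih => exact ⟨ih.1.symm, ih.2.symm⟩
  | trans _ _ _ _ _ ih1 ih2 => exact ⟨ih1.1.trans ih2.1, ih1.2.trans ih2.2⟩

/-! the quotient monoid -/
theorem StrongEq.append_left {n : ℕ} {w1 w2 : List (Letter n)} (C : List (Letter n))
    (h : StrongEq w1 w2) : StrongEq (C ++ w1) (C ++ w2) := by
  induction h with
  | rel _ _ h =>
    obtain ⟨A, B, r1, r2, h, rfl, rfl⟩ := h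
    exact .rel _ _ ⟨C ++ A, B, r1, r2, h, by simp, by simp⟩
  | refl _ => exact .refl _
  | symm _ _ _ ih => exact .symm _ _ ih
  | trans _ _ _ _ _ ih1 ih2 => exact .trans _ _ _ ih1 ih2

theorem StrongEq.append_right {n : ℕ} {w1 w2 : List (Letter n)} (C : List (Letter n))
    (h : StrongEq w1 w2) : StrongEq (w1 ++ C) (w2 ++ C) := by
  induction h with
  | rel _ _ h =>
    obtain ⟨A, B, r1, r2, h, rfl, rfl⟩ := h
    exact .rel _ _ ⟨A, B ++ C, r1, r2, h, by simp, by simp⟩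
  | refl _ => exact .refl _
  | symm _ _ _ ih => exact .symm _ _ ih
  | trans _ _ _ _ _ ih1 ih2 => exact .trans _ _ _ ih1 ih2

def sCon (n : ℕ) : Con (FreeMonoid (Letter n)) where
  r a b := StrongEq a.toList b.toList
  iseqv := ⟨fun _ => .refl _, fun h => .symm _ _ h, fun h h' => .trans _ _ _ h h'⟩
  mul' {a b c d} h h' := by
    rw [FreeMonoid.toList_mul, FreeMonoid.toList_mul]
    exact .trans _ _ _ (StrongEq.append_right _ h) (StrongEq.append_left _ h')

def ev {n : ℕ} (w : List (Letter n)) : (sCon n).Quotient := (FreeMonoid.ofList w : FreeMonoid _)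

theorem ev_eq {n : ℕ} {w1 w2 : List (Letter n)} : ev w1 = ev w2 ↔ StrongEq w1 w2 :=
  (sCon n).eq

theorem ev_append {n : ℕ} (w1 w2 : List (Letter n)) : ev (w1 ++ w2) = ev w1 * ev w2 := rfl

theorem ev_nil {n : ℕ} : ev ([] : List (Letter n)) = 1 := rfl

theorem ev_rel {n : ℕ} {r1 r2 : List (Letter n)} (h : RelStrong n r1 r2) : ev r1 = ev r2 :=
  ev_eq.2 (.rel _ _ ⟨[], [], r1, r2, h, by simp, by simp⟩)

def tQ (n : ℕ) (k : ℕ) : (sCon n).Quotient :=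
  if h : k < n - 1 then ev [.tau ⟨k, h⟩] else 1
def zQ (n : ℕ) (k : ℕ) : (sCon n).Quotient :=
  if h : k < n - 1 then ev [.zeta ⟨k, h⟩] else 1

theorem Q_rel (n : ℕ) : ZRel (n-1) (tQ n) (zQ n) where
  sq i hi := by
    simp only [tQ, hi, dif_pos]
    exact ev_rel (.tt ⟨i, hi⟩)
  far i j hi hj h := by
    simp only [tQ, hi, hj, dif_pos]
    exact ev_rel (.far_tt ⟨i, hi⟩ ⟨j, hj⟩ (by simp only [Nat.dist]; omega))
  braid i hi := by
    have hi' : i < n - 1 := by omega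
    simp only [tQ, hi, hi', dif_pos]
    exact ev_rel (.r3v ⟨i, hi'⟩ ⟨i+1, hi⟩ rfl)
  virt i hi := by
    simp only [tQ, zQ, hi, dif_pos]
    exact ev_rel (.virt ⟨i, hi⟩)
  zfar i j hi hj h := by
    simp only [tQ, zQ, hi, hj, dif_pos]
    exact ev_rel (.far_zt ⟨i, hi⟩ ⟨j, hj⟩ (by simp only [Nat.dist]; omega))
  zzfar i j hi hj h := by
    simp only [zQ, hi, hj, dif_pos]
    exact ev_rel (.far_zz ⟨i, hi⟩ ⟨j, hj⟩ (by simp only [Nat.dist]; omega))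
  semi i hi := by
    have hi' : i < n - 1 := by omega
    simp only [tQ, zQ, hi, hi', dif_pos]
    exact ev_rel (.semi ⟨i, hi'⟩ ⟨i+1, hi⟩ rfl)

def fQ {n : ℕ} : Sym2 (Fin n) → (sCon n).Quotient :=
  Sym2.lift ⟨fun a b => yy (tQ n) (zQ n) a b, fun a b => yy_symm _ _⟩

theorem fQ_conj {n : ℕ} (i : Fin (n-1)) (e : Sym2 (Fin n)) :
    tQ n i * fQ e * tQ n i = fQ (e.map (sPerm i)) := by
  induction e using Sym2.ind with
  | _ a b =>
    simp only [fQ, Sym2.map_mk, Sym2.lift_mk, sPerm_val]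
    exact yy_conj (Q_rel n) i.2 (by omega) (by omega)

theorem fQ_push {n : ℕ} (i : Fin (n-1)) (e : Sym2 (Fin n)) :
    tQ n i * fQ e = fQ (e.map (sPerm i)) * tQ n i := by
  rw [← fQ_conj, mul_assoc, (Q_rel n).sq i i.2, mul_one]

theorem oprod_push {n : ℕ} (i : Fin (n-1)) (L : List (Option (Sym2 (Fin n)))) :
    tQ n i * oprod fQ L = oprod fQ (L.map (Option.map (Sym2.map (sPerm i)))) * tQ n i := by
  induction L with
  | nil => simp [oprod_nil]
  | cons o L ih =>
    cases o with
    | none => simpa only [List.map_cons, Option.map_none, oprod_none] using ih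
    | some e =>
      simp only [List.map_cons, Option.map_some, oprod_some]
      rw [← mul_assoc, fQ_push, mul_assoc, ih, mul_assoc]

theorem ev_form {n : ℕ} (w : List (Letter n)) :
    ev w = oprod fQ (dd w) * ((w.map (fun g => (g.idx : ℕ))).map (tQ n)).prod := by
  induction w with
  | nil => simp [dd, oprod_nil, ev_nil]
  | cons g w ih =>
    have e : ev (g :: w) = ev [g] * ev w := rfl
    rw [e, ih]
    cases g with
    | tau i =>
      have h1 : ev [Letter.tau i] = tQ n i := by simp [tQ]
      simp only [dd, lab, oprod_none, List.map_cons, List.prod_cons, Letter.idx, transOf]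
      rw [h1, ← mul_assoc, oprod_push, mul_assoc]
    | zeta i =>
      have h1 : ev [Letter.zeta i] = zQ n i := by simp [zQ]
      have h2 : fQ s(lo i, hi i) = zQ n i * tQ n i := by
        simp [fQ, yy, lo, hi, xx]
      have h3 : zQ n i = fQ s(lo i, hi i) * tQ n i := by
        rw [h2, mul_assoc, (Q_rel n).sq i i.2, mul_one]
      simp only [dd, lab, oprod_some, List.map_cons, List.prod_cons, Letter.idx, transOf]
      rw [h1, h3, ← mul_assoc, mul_assoc (fQ _), oprod_push]
      simp only [mul_assoc]

theorem fQ_comm_perm {n : ℕ} (p : Equiv.Perm (Fin n)) (e e' : Sym2 (Fin n))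
    (h : fQ e * fQ e' = fQ e' * fQ e) :
    fQ (e.map p) * fQ (e'.map p) = fQ (e'.map p) * fQ (e.map p) := by
  have hp : p ∈ Submonoid.closure (Set.range (sPerm (n := n))) := by
    cases n with
    | zero => rw [Subsingleton.elim p 1]; exact one_mem _
    | succ n =>
      have : Submonoid.closure (Set.range (sPerm (n := n + 1))) = ⊤ :=
        Equiv.Perm.mclosure_swap_castSucc_succ n
      rw [this]; trivial
  induction hp using Submonoid.closure_induction_left generalizing e e' with
  | one => simpa using h
  | mul_left x hx y hy ih =>
    obtain ⟨i, rfl⟩ := hx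
    have h1 := ih e e' h
    have key : ∀ a b : Sym2 (Fin n), fQ (a.map (sPerm i)) * fQ (b.map (sPerm i))
        = tQ n i * (fQ a * fQ b) * tQ n i := by
      intro a b
      rw [← fQ_conj, ← fQ_conj]
      calc _ = tQ n i * fQ a * (tQ n i * tQ n i) * fQ b * tQ n i := by simp only [mul_assoc]
        _ = _ := by rw [(Q_rel n).sq i i.2]; simp only [mul_assoc, mul_one, one_mul]
    have hm : ∀ a : Sym2 (Fin n), a.map (sPerm i * y : Equiv.Perm (Fin n)) = (a.map y).map (sPerm i) := by
      intro a
      rw [Sym2.map_map]; rfl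
    rw [hm, hm, key, key, h1]

theorem fQ_comm {n : ℕ} (e e' : Sym2 (Fin n)) (h : ∀ a, a ∈ e → a ∉ e') :
    fQ e * fQ e' = fQ e' * fQ e := by
  induction e using Sym2.ind with
  | _ a b =>
  induction e' using Sym2.ind with
  | _ c d =>
  by_cases hab : a = b
  · subst hab; simp [fQ, yy]
  by_cases hcd : c = d
  · subst hcd; simp [fQ, yy]
  have h1 := h a (by simp)
  have h2 := h b (by simp)
  simp only [Sym2.mem_iff, not_or] at h1 h2
  have hinj : Function.Injective ![a, b, c, d] := by
    intro x y hxy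
    fin_cases x <;> fin_cases y <;> simp at hxy ⊢ <;> grind
  have hn : 4 ≤ n := by
    have := Fintype.card_le_of_injective _ hinj
    simpa using this
  obtain ⟨p, hp⟩ := Equiv.Perm.exists_extending_pair
    (Fin.castLE hn) ![a, b, c, d] (Fin.castLE_injective hn) hinj
  have p0 := hp 0
  have p1 := hp 1
  have p2 := hp 2
  have p3 := hp 3
  simp only [Matrix.cons_val] at p0 p1 p2 p3
  have key := fQ_comm_perm p s(Fin.castLE hn 0, Fin.castLE hn 1) s(Fin.castLE hn 2, Fin.castLE hn 3) ?_
  · simpa only [Sym2.map_mk, p0, p1, p2, p3] using key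
  · have q := Q_rel n
    have hx : fQ s(Fin.castLE hn 0, Fin.castLE hn 1) = zQ n 0 * tQ n 0 := by
      simp [fQ, yy, xx]
    have hy : fQ s(Fin.castLE hn 2, Fin.castLE hn 3) = zQ n 2 * tQ n 2 := by
      simp [fQ, yy, xx]
    have c1 : Commute (zQ n 0) (zQ n 2) := q.zzfar 0 2 (by omega) (by omega) (by omega)
    have c2 : Commute (zQ n 0) (tQ n 2) := q.zfar 0 2 (by omega) (by omega) (by omega)
    have c3 : Commute (zQ n 2) (tQ n 0) := q.zfar 2 0 (by omega) (by omega) (by omega)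
    have c4 : Commute (tQ n 0) (tQ n 2) := q.far 0 2 (by omega) (by omega) (by omega)
    rw [hx, hy]
    exact (c1.mul_right c2).mul_left (c3.symm.mul_right c4)

theorem word_perm {n : ℕ} (w : List (Letter n)) (x : Fin n) :
    (((permOf w)⁻¹ x : Fin n) : ℕ) = ((w.map (fun g => (g.idx : ℕ))).map sN).prod x := by
  induction w with
  | nil => simp [permOf]
  | cons g w ih =>
    rw [permOf_cons, mul_inv_rev, transOf_inv]
    simp only [List.map_cons, List.prod_cons, Equiv.Perm.mul_apply, transOf, sPerm_val, ih]

theorem tau_eq {n : ℕ} (w1 w2 : List (Letter n)) (h : permOf w1 = permOf w2) :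
    ((w1.map (fun g => (g.idx : ℕ))).map (tQ n)).prod
      = ((w2.map (fun g => (g.idx : ℕ))).map (tQ n)).prod := by
  set T : List (Letter n) → (sCon n).Quotient :=
    fun w => ((w.map (fun g => (g.idx : ℕ))).map (tQ n)).prod with hT
  have happ : ∀ u v, T (u ++ v) = T u * T v := by intro u v; simp [hT]
  have hone : ∀ w, permOf w = 1 → T w = 1 := by
    intro w hw
    refine coxeter (Q_rel n).toTRel (n-1) le_rfl _ ?_ ?_
    · intro i hi
      obtain ⟨g, _, rfl⟩ := List.mem_map.1 hi
      exact g.idx.2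
    · intro x hx
      cases n with
      | zero =>
        cases w with
        | nil => simp
        | cons g w => exact g.idx.elim0
      | succ n =>
        have := word_perm w ⟨x, by omega⟩
        rw [hw] at this
        simpa using this.symm
  have hrev : ∀ w : List (Letter n), permOf w.reverse = (permOf w)⁻¹ := by
    intro w
    induction w with
    | nil => simp [permOf]
    | cons g w ih =>
      rw [List.reverse_cons, permOf_append, ih, permOf_cons g w, mul_inv_rev, transOf_inv]
      simp [permOf]
  have a1 : T (w1.reverse ++ w1) = 1 := hone _ (by rw [permOf_append, hrev, mul_inv_cancel])
  have a2 : T (w2 ++ w1.reverse) = 1 := hone _ (by rw [permOf_append, hrev, h, inv_mul_cancel])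
  rw [happ] at a1 a2
  change T w1 = T w2
  calc T w1 = (T w2 * T w1.reverse) * T w1 := by rw [a2, one_mul]
    _ = T w2 := by rw [mul_assoc, a1, mul_one]

/-- two braid words are strongly equivalent iff their decorated graphs
`Γ` are isomorphic preserving all structure (endpoint ordering / permutation,
orientation, strand pairs through crossings, and order of crossings along strands). -/
theorem strongEq_iff_gammaIso (n : ℕ) (w1 w2 : List (Letter n)) :
    StrongEq w1 w2 ↔ ∃ φ : ℕ → ℕ, IsGammaIso w1 w2 φ := by
  constructor
  · intro h
    obtain ⟨⟨φ, h1⟩, h2⟩ := strong_OR h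
    exact ⟨φ, (gamma_iff _ _ _).2 ⟨h1, h2⟩⟩
  · rintro ⟨φ, h⟩
    obtain ⟨h1, h2⟩ := (gamma_iff _ _ _).1 h
    rw [← ev_eq, ev_form, ev_form, tau_eq w1 w2 h2, oprod_eq fQ fQ_comm _ _ φ h1]

end OneTermBracket
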